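/- arXiv:2012.10313 — 7 statements merged into one kernel-verified Lean document; each statement's English description precedes it below -/
import Mathlib

section
/- Let (S, stepS) and (T, stepT) be two transition systems, let ~ : S → T → Prop be a relation, and let ≺ be a well-founded relation on S such that the measured step diagram holds: whenever σ1 ~ ς1 and stepS σ1 σ2, either there exists ς2 with stepT+ ς1 ς2 and σ2 ~ ς2, or else σ2 ~ ς1 and σ2 ≺ σ1. Then the simulation preserves divergence: if σ ~ ς and σ diverges in the source system, then ς diverges in the target system. -/
/-- A state diverges: there is an infinite run starting at `s`. -/
def Diverges {S : Type*} (step : S → S → Prop) (s : S) : Prop :=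
  ∃ f : ℕ → S, f 0 = s ∧ ∀ n, step (f n) (f (n + 1))

/-- a measured forward simulation preserves divergence. -/
theorem measured_simulation_preserves_divergence {S T : Type*}
    (stepS : S → S → Prop) (stepT : T → T → Prop)
    (sim : S → T → Prop) (lt : S → S → Prop) (hwf : WellFounded lt)
    (hdiag : ∀ σ1 ς1 σ2, sim σ1 ς1 → stepS σ1 σ2 →
      (∃ ς2, Relation.TransGen stepT ς1 ς2 ∧ sim σ2 ς2) ∨
      (sim σ2 ς1 ∧ lt σ2 σ1)) :
    ∀ σ ς, sim σ ς → Diverges stepS σ → Diverges stepT ς := by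
  have key : ∀ σ, ∀ ς, sim σ ς → Diverges stepS σ →
      ∃ ς2 σ2, Relation.TransGen stepT ς ς2 ∧ sim σ2 ς2 ∧ Diverges stepS σ2 := by
    intro σ
    induction σ using hwf.induction with
    | _ σ ih =>
      rintro ς hs ⟨f, rfl, hf⟩
      have hd : Diverges stepS (f 1) := ⟨fun n => f (n + 1), rfl, fun n => hf (n + 1)⟩
      rcases hdiag _ _ _ hs (hf 0) with ⟨ς2, ht, hs2⟩ | ⟨hs2, hlt⟩
      · exact ⟨ς2, _, ht, hs2, hd⟩
      · exact ih _ hlt ς hs2 hd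
  let P : T → Prop := fun ς =>
    ∃ ς', Relation.ReflTransGen stepT ς ς' ∧ ∃ σ, sim σ ς' ∧ Diverges stepS σ
  have hP : ∀ x : {ς // P ς}, ∃ y : {ς // P ς}, stepT x.1 y.1 := by
    rintro ⟨ς, ς', hr, σ, hs, hd⟩
    obtain ⟨ς2, σ2, ht, hs2, hd2⟩ := key σ ς' hs hd
    have ht2 : Relation.TransGen stepT ς ς2 := Relation.TransGen.trans_right hr ht
    obtain ⟨c, hc, hr2⟩ := Relation.TransGen.head'_iff.1 ht2
    exact ⟨⟨c, ς2, hr2, σ2, hs2, hd2⟩, hc⟩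
  choose g hg using hP
  intro σ ς hs hd
  refine ⟨fun n => (g^[n] ⟨ς, ς, .refl, σ, hs, hd⟩).1, rfl, fun n => ?_⟩
  simp only [Function.iterate_succ_apply']
  exact hg _
end

section
/- Let (S, step, final) be a transition system over result type R. Then (classically, using dependent choice) every state exhibits at least one behavior: for every state s, either s terminates with some result r, or s diverges, or s goes wrong. -/
def Stuck {S : Type*} (step : S → S → Prop) (s : S) : Prop :=
  ¬ ∃ s', step s s'

def Terminates {S R : Type*} (step : S → S → Prop) (final : S → R → Prop)
    (s : S) (r : R) : Prop :=
  ∃ s', Relation.ReflTransGen step s s' ∧ final s' r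

def GoesWrong {S R : Type*} (step : S → S → Prop) (final : S → R → Prop)
    (s : S) : Prop :=
  ∃ s', Relation.ReflTransGen step s s' ∧ Stuck step s' ∧ ¬ ∃ r, final s' r

/-- every state exhibits at least one behavior. -/
theorem behavior_exists {S R : Type*}
    (step : S → S → Prop) (final : S → R → Prop) (s : S) :
    (∃ r, Terminates step final s r) ∨ Diverges step s ∨ GoesWrong step final s := by
  by_cases h : ∃ s', Relation.ReflTransGen step s s' ∧ Stuck step s'
  · obtain ⟨s', hs, hst⟩ := h
    by_cases hf : ∃ r, final s' r
    · obtain ⟨r, hr⟩ := hf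
      exact Or.inl ⟨r, s', hs, hr⟩
    · exact Or.inr (Or.inr ⟨s', hs, hst, hf⟩)
  · have hn : ∀ x : {x // Relation.ReflTransGen step s x},
        ∃ y : {x // Relation.ReflTransGen step s x}, step x.1 y.1 := by
      rintro ⟨x, hx⟩
      by_contra hc
      exact h ⟨x, hx, fun ⟨y, hy⟩ => hc ⟨⟨y, hx.tail hy⟩, hy⟩⟩
    choose g hg using hn
    refine Or.inr (Or.inl ⟨fun n => (Nat.rec ⟨s, Relation.ReflTransGen.refl⟩
      (fun _ x => g x) n : {x // Relation.ReflTransGen step s x}).1, rfl, fun n => hg _⟩)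
end

section
/- Let (S, stepS, finalS) be a source transition system and (T, stepT, finalT) a deterministic target transition system over the same result type R (deterministic: stepT ς ς1 and stepT ς ς2 imply ς1 = ς2; finalT ς r implies ς is stuck; finalT ς r1 and finalT ς r2 imply r1 = r2). Let ~ : S → T → Prop and a well-founded relation ≺ on S form a measured forward simulation: whenever σ1 ~ ς1 and stepS σ1 σ2, either there exists ς2 with stepT+ ς1 ς2 and σ2 ~ ς2, or σ2 ~ ς1 and σ2 ≺ σ1; and whenever σ ~ ς and finalS σ r, there exists ς' with stepT* ς ς' and finalT ς' r. Suppose σ0 ~ ς0 and σ0 is safe. Then (classically) if ς0 terminates with result r in the target system, σ0 terminates with result r in the source system. -/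
def Safe {S R : Type*} (step : S → S → Prop) (final : S → R → Prop)
    (s : S) : Prop :=
  ∀ s', Relation.ReflTransGen step s s' → (∃ s'', step s' s'') ∨ ∃ r, final s' r

/-- backward preservation of termination for measured forward
simulations into a deterministic target. -/
theorem backward_termination {S T R : Type*}
    (stepS : S → S → Prop) (finalS : S → R → Prop)
    (stepT : T → T → Prop) (finalT : T → R → Prop)
    (hdetT : ∀ ς ς1 ς2, stepT ς ς1 → stepT ς ς2 → ς1 = ς2)
    (hfinalStuckT : ∀ ς r, finalT ς r → Stuck stepT ς)
    (hfinalDetT : ∀ ς r1 r2, finalT ς r1 → finalT ς r2 → r1 = r2)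
    (sim : S → T → Prop) (lt : S → S → Prop) (hwf : WellFounded lt)
    (hstep : ∀ σ1 ς1 σ2, sim σ1 ς1 → stepS σ1 σ2 →
      (∃ ς2, Relation.TransGen stepT ς1 ς2 ∧ sim σ2 ς2) ∨
      (sim σ2 ς1 ∧ lt σ2 σ1))
    (hfinal : ∀ σ ς r, sim σ ς → finalS σ r →
      ∃ ς', Relation.ReflTransGen stepT ς ς' ∧ finalT ς' r)
    (σ0 : S) (ς0 : T) (hsim : sim σ0 ς0) (hsafe : Safe stepS finalS σ0) :
    ∀ r, Terminates stepT finalT ς0 r → Terminates stepS finalS σ0 r := by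
  have stuckEq : ∀ t u r, finalT t r → Relation.ReflTransGen stepT t u → t = u := by
    intro t u r hf h
    rcases Relation.ReflTransGen.cases_head h with h | ⟨c, hc, _⟩
    · exact h
    · exact absurd ⟨c, hc⟩ (hfinalStuckT t r hf)
  have pres : ∀ a b t r, finalT t r → Relation.ReflTransGen stepT a t →
      Relation.ReflTransGen stepT a b → Relation.ReflTransGen stepT b t := by
    intro a b t r hf h1 h2
    induction h2 with
    | refl => exact h1
    | tail _ hbc ih =>
      rcases Relation.ReflTransGen.cases_head ih with h | ⟨d, hd, hdt⟩
      · subst h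
        exact absurd ⟨_, hbc⟩ (hfinalStuckT _ r hf)
      · rw [hdetT _ _ _ hbc hd]
        exact hdt
  intro r ⟨t, ht, hf⟩
  have hacc : Acc (fun a b => stepT b a) ς0 := by
    clear hsim
    induction ht using Relation.ReflTransGen.head_induction_on with
    | refl => exact ⟨_, fun y hy => absurd ⟨y, hy⟩ (hfinalStuckT t r hf)⟩
    | head hab _ ih =>
      refine ⟨_, fun y hy => ?_⟩
      rw [hdetT _ _ _ hy hab]
      exact ih
  have hacc' : Acc (Relation.TransGen (fun a b => stepT b a)) ς0 := hacc.transGen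
  clear hacc
  induction hacc' generalizing σ0 with
  | intro ς _ ih =>
    induction σ0 using hwf.induction with
    | _ σ ih2 =>
      rcases hsafe σ .refl with ⟨σ', hs⟩ | ⟨r', hr⟩
      · have hsafe' : Safe stepS finalS σ' := fun s h => hsafe s (.head hs h)
        have key : Terminates stepS finalS σ' r := by
          rcases hstep σ ς σ' hsim hs with ⟨ς2, h2, hsim2⟩ | ⟨hsim2, hlt⟩
          · exact ih ς2 (Relation.TransGen.swap _ _ h2) σ' hsim2 hsafe'
              (pres _ _ _ _ hf ht h2.to_reflTransGen)
          · exact ih2 σ' hlt hsim2 hsafe'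
        obtain ⟨s, h, hfs⟩ := key
        exact ⟨s, .head hs h, hfs⟩
      · obtain ⟨t', ht', hf'⟩ := hfinal σ ς r' hsim hr
        have e := stuckEq _ _ _ hf' (pres _ _ _ _ hf ht ht')
        subst e
        rw [hfinalDetT _ _ _ hf hf']
        exact ⟨σ, .refl, hr⟩
end

section
/- Let (S, stepS, finalS) be a source transition system and (T, stepT, finalT) a deterministic target transition system over the same result type R (deterministic: stepT ς ς1 and stepT ς ς2 imply ς1 = ς2; finalT ς r implies ς is stuck; finalT ς r1 and finalT ς r2 imply r1 = r2). Let ~ : S → T → Prop and a well-founded relation ≺ on S form a measured forward simulation: whenever σ1 ~ ς1 and stepS σ1 σ2, either there exists ς2 with stepT+ ς1 ς2 and σ2 ~ ς2, or σ2 ~ ς1 and σ2 ≺ σ1; and whenever σ ~ ς and finalS σ r, there exists ς' with stepT* ς ς' and finalT ς' r. Suppose σ0 ~ ς0 and σ0 is safe. Then (classically, using dependent choice) if ς0 diverges in the target system, σ0 diverges in the source system. -/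
/-- backward preservation of divergence for measured forward
simulations into a deterministic target. -/
theorem backward_divergence {S T R : Type*}
    (stepS : S → S → Prop) (finalS : S → R → Prop)
    (stepT : T → T → Prop) (finalT : T → R → Prop)
    (hdetT : ∀ ς ς1 ς2, stepT ς ς1 → stepT ς ς2 → ς1 = ς2)
    (hfinalStuckT : ∀ ς r, finalT ς r → Stuck stepT ς)
    (hfinalDetT : ∀ ς r1 r2, finalT ς r1 → finalT ς r2 → r1 = r2)
    (sim : S → T → Prop) (lt : S → S → Prop) (hwf : WellFounded lt)
    (hstep : ∀ σ1 ς1 σ2, sim σ1 ς1 → stepS σ1 σ2 →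
      (∃ ς2, Relation.TransGen stepT ς1 ς2 ∧ sim σ2 ς2) ∨
      (sim σ2 ς1 ∧ lt σ2 σ1))
    (hfinal : ∀ σ ς r, sim σ ς → finalS σ r →
      ∃ ς', Relation.ReflTransGen stepT ς ς' ∧ finalT ς' r)
    (σ0 : S) (ς0 : T) (hsim : sim σ0 ς0) (hsafe : Safe stepS finalS σ0) :
    Diverges stepT ς0 → Diverges stepS σ0 := by
  have hdivT : ∀ a b, Relation.ReflTransGen stepT a b → Diverges stepT a → Diverges stepT b := by
    intro a b hab ha
    induction hab with
    | refl => exact ha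
    | tail _ hbc ih =>
      obtain ⟨f, hf0, hf⟩ := ih
      refine ⟨fun n => f (n + 1), ?_, fun n => hf (n + 1)⟩
      have h1 := hf 0
      rw [hf0] at h1
      exact hdetT _ _ _ h1 hbc
  intro hdiv
  let P : S → Prop := fun σ => Safe stepS finalS σ ∧ ∃ ς, sim σ ς ∧ Diverges stepT ς
  have key : ∀ x : {σ // P σ}, ∃ y : {σ // P σ}, stepS x.1 y.1 := by
    rintro ⟨σ, hs, ς, hsm, hd⟩
    rcases hs σ Relation.ReflTransGen.refl with ⟨σ', hst⟩ | ⟨r, hr⟩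
    · have hs' : Safe stepS finalS σ' := fun s h => hs s (Relation.ReflTransGen.head hst h)
      rcases hstep σ ς σ' hsm hst with ⟨ς2, ht, hsm2⟩ | ⟨hsm2, _⟩
      · exact ⟨⟨σ', hs', ς2, hsm2, hdivT _ _ ht.to_reflTransGen hd⟩, hst⟩
      · exact ⟨⟨σ', hs', ς, hsm2, hd⟩, hst⟩
    · obtain ⟨ς', hre, hfin⟩ := hfinal σ ς r hsm hr
      obtain ⟨f, hf0, hf⟩ := hdivT _ _ hre hd
      exact absurd ⟨f 1, hf0 ▸ hf 0⟩ (hfinalStuckT _ _ hfin)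
  choose g hg using key
  let F : ℕ → {σ // P σ} := fun n => Nat.rec ⟨σ0, hsafe, ς0, hsim, hdiv⟩ (fun _ x => g x) n
  exact ⟨fun n => (F n).1, rfl, fun n => hg (F n)⟩
end

section
/- Let (S, stepS, finalS) be a source transition system and (T, stepT, finalT) a deterministic target transition system over the same result type R (deterministic: stepT ς ς1 and stepT ς ς2 imply ς1 = ς2; finalT ς r implies ς is stuck; finalT ς r1 and finalT ς r2 imply r1 = r2). Let ~ : S → T → Prop and a well-founded relation ≺ on S form a measured forward simulation: whenever σ1 ~ ς1 and stepS σ1 σ2, either there exists ς2 with stepT+ ς1 ς2 and σ2 ~ ς2, or σ2 ~ ς1 and σ2 ≺ σ1; and whenever σ ~ ς and finalS σ r, there exists ς' with stepT* ς ς' and finalT ς' r. Suppose σ0 ~ ς0 and σ0 is safe. Then (classically, using dependent choice) ς0 is safe, i.e. the target state does not go wrong. -/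
/-- the target state of a measured forward simulation from a
safe source state is safe (does not go wrong). -/
theorem backward_safety {S T R : Type*}
    (stepS : S → S → Prop) (finalS : S → R → Prop)
    (stepT : T → T → Prop) (finalT : T → R → Prop)
    (hdetT : ∀ ς ς1 ς2, stepT ς ς1 → stepT ς ς2 → ς1 = ς2)
    (hfinalStuckT : ∀ ς r, finalT ς r → Stuck stepT ς)
    (hfinalDetT : ∀ ς r1 r2, finalT ς r1 → finalT ς r2 → r1 = r2)
    (sim : S → T → Prop) (lt : S → S → Prop) (hwf : WellFounded lt)
    (hstep : ∀ σ1 ς1 σ2, sim σ1 ς1 → stepS σ1 σ2 →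
      (∃ ς2, Relation.TransGen stepT ς1 ς2 ∧ sim σ2 ς2) ∨
      (sim σ2 ς1 ∧ lt σ2 σ1))
    (hfinal : ∀ σ ς r, sim σ ς → finalS σ r →
      ∃ ς', Relation.ReflTransGen stepT ς ς' ∧ finalT ς' r)
    (σ0 : S) (ς0 : T) (hsim : sim σ0 ς0) (hsafe : Safe stepS finalS σ0) :
    Safe stepT finalT ς0 := by
  let Q : T → Prop := fun ς =>
    (∃ ς' σ, Relation.ReflTransGen stepT ς ς' ∧ sim σ ς' ∧ Safe stepS finalS σ) ∨
    (∃ ς' r, Relation.ReflTransGen stepT ς ς' ∧ finalT ς' r)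
  have hA : ∀ σ ς, sim σ ς → Safe stepS finalS σ →
      (∃ r, finalT ς r) ∨ ∃ ς1, stepT ς ς1 ∧ Q ς1 := by
    intro σ
    induction σ using hwf.induction with
    | _ σ ih =>
      intro ς hs hsf
      rcases hsf σ Relation.ReflTransGen.refl with ⟨σ2, h2⟩ | ⟨r, hr⟩
      · have hsf2 : Safe stepS finalS σ2 := fun s' h' => hsf s' (Relation.ReflTransGen.head h2 h')
        rcases hstep σ ς σ2 hs h2 with ⟨ς2, ht, hs2⟩ | ⟨hs2, hlt⟩
        · obtain ⟨ς1, h1, h1'⟩ := Relation.TransGen.head'_iff.mp ht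
          exact Or.inr ⟨ς1, h1, Or.inl ⟨ς2, σ2, h1', hs2, hsf2⟩⟩
        · exact ih σ2 hlt ς hs2 hsf2
      · obtain ⟨ς', ht, hf⟩ := hfinal σ ς r hs hr
        rcases Relation.ReflTransGen.cases_head ht with rfl | ⟨ς1, h1, h1'⟩
        · exact Or.inl ⟨r, hf⟩
        · exact Or.inr ⟨ς1, h1, Or.inr ⟨ς', r, h1', hf⟩⟩
  have hQ : ∀ ς, Q ς → (∃ r, finalT ς r) ∨ ∃ ς1, stepT ς ς1 ∧ Q ς1 := by
    rintro ς (⟨ς', σ, ht, hs, hsf⟩ | ⟨ς', r, ht, hf⟩)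
    · rcases Relation.ReflTransGen.cases_head ht with rfl | ⟨ς1, h1, h1'⟩
      · exact hA σ _ hs hsf
      · exact Or.inr ⟨ς1, h1, Or.inl ⟨ς', σ, h1', hs, hsf⟩⟩
    · rcases Relation.ReflTransGen.cases_head ht with rfl | ⟨ς1, h1, h1'⟩
      · exact Or.inl ⟨r, hf⟩
      · exact Or.inr ⟨ς1, h1, Or.inr ⟨ς', r, h1', hf⟩⟩
  intro s' h'
  have hQs : Q s' := by
    induction h' with
    | refl => exact Or.inl ⟨ς0, σ0, Relation.ReflTransGen.refl, hsim, hsafe⟩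
    | tail _ hbc ihb =>
      rcases hQ _ ihb with ⟨r, hf⟩ | ⟨ς1, h1, hq⟩
      · exact absurd ⟨_, hbc⟩ (hfinalStuckT _ r hf)
      · exact hdetT _ _ _ h1 hbc ▸ hq
  rcases hQ s' hQs with h | ⟨ς1, h1, _⟩
  · exact Or.inr h
  · exact Or.inl ⟨ς1, h1⟩
end

section
/- Refinement for safe programs (abstract form of the paper's Theorems 1 and 2). Let (S, stepS, finalS) be a source transition system and (T, stepT, finalT) a deterministic target transition system over the same result type R (deterministic: stepT ς ς1 and stepT ς ς2 imply ς1 = ς2; finalT ς r implies ς is stuck; finalT ς r1 and finalT ς r2 imply r1 = r2). Let ~ : S → T → Prop and a well-founded relation ≺ on S form a measured forward simulation: whenever σ1 ~ ς1 and stepS σ1 σ2, either there exists ς2 with stepT+ ς1 ς2 and σ2 ~ ς2, or σ2 ~ ς1 and σ2 ≺ σ1; and whenever σ ~ ς and finalS σ r, there exists ς' with stepT* ς ς' and finalT ς' r. Suppose σ0 ~ ς0 and σ0 is safe. Then (classically, using dependent choice) every behavior exhibited by ς0 is exhibited by σ0: if ς0 terminates with result r then σ0 terminates with result r; if ς0 diverges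 then σ0 diverges; and ς0 does not go wrong. -/
/-- refinement for safe programs (abstract form of the paper's
Theorems 1 and 2). -/
theorem refinement_for_safe_programs {S T R : Type*}
    (stepS : S → S → Prop) (finalS : S → R → Prop)
    (stepT : T → T → Prop) (finalT : T → R → Prop)
    (hdetT : ∀ ς ς1 ς2, stepT ς ς1 → stepT ς ς2 → ς1 = ς2)
    (hfinalStuckT : ∀ ς r, finalT ς r → Stuck stepT ς)
    (hfinalDetT : ∀ ς r1 r2, finalT ς r1 → finalT ς r2 → r1 = r2)
    (sim : S → T → Prop) (lt : S → S → Prop) (hwf : WellFounded lt)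
    (hstep : ∀ σ1 ς1 σ2, sim σ1 ς1 → stepS σ1 σ2 →
      (∃ ς2, Relation.TransGen stepT ς1 ς2 ∧ sim σ2 ς2) ∨
      (sim σ2 ς1 ∧ lt σ2 σ1))
    (hfinal : ∀ σ ς r, sim σ ς → finalS σ r →
      ∃ ς', Relation.ReflTransGen stepT ς ς' ∧ finalT ς' r)
    (σ0 : S) (ς0 : T) (hsim : sim σ0 ς0) (hsafe : Safe stepS finalS σ0) :
    (∀ r, Terminates stepT finalT ς0 r → Terminates stepS finalS σ0 r) ∧
    (Diverges stepT ς0 → Diverges stepS σ0) ∧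
    ¬ GoesWrong stepT finalT ς0 := by
  have safe_step : ∀ a b, Safe stepS finalS a → Relation.ReflTransGen stepS a b →
      Safe stepS finalS b := fun a b h hab c hc => h c (hab.trans hc)
  have hru : Relator.RightUnique stepT := fun a b c h1 h2 => hdetT a b c h1 h2
  have stuck_eq : ∀ a b, Stuck stepT a → Relation.ReflTransGen stepT a b → a = b := by
    intro a b ha hab
    rcases Relation.ReflTransGen.cases_head hab with h | ⟨c, hc, _⟩
    · exact h
    · exact (ha ⟨c, hc⟩).elim
  have keyA : ∀ σ ς, sim σ ς → Safe stepS finalS σ →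
      (∃ r, Terminates stepS finalS σ r ∧ Terminates stepT finalT ς r) ∨
      ∃ σ' ς', Relation.ReflTransGen stepS σ σ' ∧ Relation.TransGen stepT ς ς' ∧ sim σ' ς' := by
    intro σ
    induction σ using hwf.induction with
    | _ σ ih =>
      intro ς hs hsf
      rcases hsf σ Relation.ReflTransGen.refl with ⟨σ2, h2⟩ | ⟨r, hr⟩
      · rcases hstep σ ς σ2 hs h2 with ⟨ς2, ht, hs2⟩ | ⟨hs2, hlt⟩
        · exact Or.inr ⟨σ2, ς2, Relation.ReflTransGen.single h2, ht, hs2⟩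
        · rcases ih σ2 hlt ς hs2 (safe_step σ σ2 hsf (Relation.ReflTransGen.single h2)) with
            ⟨r, ⟨s', hs', hf⟩, hT⟩ | ⟨σ', ς', h1, h3, h4⟩
          · exact Or.inl ⟨r, ⟨s', Relation.ReflTransGen.head h2 hs', hf⟩, hT⟩
          · exact Or.inr ⟨σ', ς', Relation.ReflTransGen.head h2 h1, h3, h4⟩
      · exact Or.inl ⟨r, ⟨σ, Relation.ReflTransGen.refl, hr⟩, hfinal σ ς r hs hr⟩
  have keyB : ∀ t, Stuck stepT t → ∀ ς, Relation.ReflTransGen stepT ς t →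
      ∀ σ, sim σ ς → Safe stepS finalS σ →
      ∃ r, Terminates stepS finalS σ r ∧ finalT t r := by
    intro t ht ς hς
    have hacc : Acc (fun a b => stepT b a) ς := by
      induction hς using Relation.ReflTransGen.head_induction_on with
      | refl => exact Acc.intro _ fun y hy => (ht ⟨y, hy⟩).elim
      | head h _ ih => exact Acc.intro _ fun y hy => hdetT _ _ _ h hy ▸ ih
    have hacc2 := hacc.transGen
    induction hacc2 with
    | intro ς _ ih =>
      intro σ hs hsf
      rcases keyA σ ς hs hsf with ⟨r, hS, t', ht', hf⟩ | ⟨σ', ς', h1, h2, h3⟩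
      · have : t = t' := by
          rcases Relation.ReflTransGen.total_of_right_unique hru hς ht' with h | h
          · exact stuck_eq _ _ ht h
          · exact (stuck_eq _ _ (hfinalStuckT _ _ hf) h).symm
        exact ⟨r, hS, this ▸ hf⟩
      · have hlt : Relation.TransGen (fun a b => stepT b a) ς' ς := Relation.TransGen.swap _ _ h2
        have hr : Relation.ReflTransGen stepT ς' t := by
          rcases Relation.ReflTransGen.total_of_right_unique hru hς h2.to_reflTransGen with h | h
          · exact stuck_eq _ _ ht h ▸ Relation.ReflTransGen.refl
          · exact h
        obtain ⟨r, ⟨s', hs', hf⟩, hr'⟩ := ih ς' hlt hr (hacc.inv_of_transGen hlt) σ' h3 (safe_step _ _ hsf h1)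
        exact ⟨r, ⟨s', h1.trans hs', hf⟩, hr'⟩
  refine ⟨?_, ?_, ?_⟩
  · rintro r ⟨t, ht, hf⟩
    obtain ⟨r', h1, h2⟩ := keyB t (hfinalStuckT _ _ hf) ς0 ht σ0 hsim hsafe
    exact hfinalDetT _ _ _ h2 hf ▸ h1
  · intro hdiv
    have div_star : ∀ a b, Relation.ReflTransGen stepT a b → Diverges stepT a →
        Diverges stepT b := by
      intro a b hab hd
      induction hab with
      | refl => exact hd
      | tail _ h ih =>
        obtain ⟨f, h0, hf⟩ := ih
        refine ⟨fun n => f (n + 1), ?_, fun n => hf (n + 1)⟩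
        exact hdetT _ _ _ (h0 ▸ hf 0) h
    let Inv : S → Prop := fun σ => ∃ ς, sim σ ς ∧ Safe stepS finalS σ ∧ Diverges stepT ς
    have hnext : ∀ x : {σ // Inv σ}, ∃ y : {σ // Inv σ}, stepS x.1 y.1 := by
      rintro ⟨σ, ς, hs, hsf, hd⟩
      rcases hsf σ Relation.ReflTransGen.refl with ⟨σ2, h2⟩ | ⟨r, hr⟩
      · have hsf2 := safe_step _ _ hsf (Relation.ReflTransGen.single h2)
        rcases hstep σ ς σ2 hs h2 with ⟨ς2, ht, hs2⟩ | ⟨hs2, _⟩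
        · exact ⟨⟨σ2, ς2, hs2, hsf2, div_star _ _ ht.to_reflTransGen hd⟩, h2⟩
        · exact ⟨⟨σ2, ς, hs2, hsf2, hd⟩, h2⟩
      · obtain ⟨t, ht, hf⟩ := hfinal σ ς r hs hr
        obtain ⟨f, h0, hf'⟩ := div_star _ _ ht hd
        exact (hfinalStuckT _ _ hf ⟨f 1, h0 ▸ hf' 0⟩).elim
    choose g hg using hnext
    refine ⟨fun n => (g^[n] ⟨σ0, ς0, hsim, hsafe, hdiv⟩).1, rfl, fun n => ?_⟩
    simp only [Function.iterate_succ_apply']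
    exact hg _
  · rintro ⟨t, ht, hst, hn⟩
    obtain ⟨r, _, h2⟩ := keyB t hst ς0 ht σ0 hsim hsafe
    exact hn ⟨r, h2⟩
end

section
/- Composition of compiler passes preserving refinement for safe programs. Let (S, stepS, finalS), (M, stepM, finalM), and (T, stepT, finalT) be three transition systems over the same result type R, with distinguished states σ0 : S, μ0 : M, τ0 : T. Suppose: (i) if σ0 is safe, then every behavior of μ0 is a behavior of σ0 (if μ0 terminates with r then σ0 terminates with r; if μ0 diverges then σ0 diverges; if μ0 goes wrong then σ0 goes wrong); and (ii) if μ0 is safe, then every behavior of τ0 is a behavior of μ0 (analogously). Then (classically) if σ0 is safe, every behavior of τ0 is a behavior of σ0. -/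
/-- composition of compiler passes preserving refinement for
safe programs. -/
theorem refinement_composition {S M T R : Type*}
    (stepS : S → S → Prop) (finalS : S → R → Prop)
    (stepM : M → M → Prop) (finalM : M → R → Prop)
    (stepT : T → T → Prop) (finalT : T → R → Prop)
    (σ0 : S) (μ0 : M) (τ0 : T)
    (h1 : Safe stepS finalS σ0 →
      (∀ r, Terminates stepM finalM μ0 r → Terminates stepS finalS σ0 r) ∧
      (Diverges stepM μ0 → Diverges stepS σ0) ∧
      (GoesWrong stepM finalM μ0 → GoesWrong stepS finalS σ0))
    (h2 : Safe stepM finalM μ0 →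
      (∀ r, Terminates stepT finalT τ0 r → Terminates stepM finalM μ0 r) ∧
      (Diverges stepT τ0 → Diverges stepM μ0) ∧
      (GoesWrong stepT finalT τ0 → GoesWrong stepM finalM μ0)) :
    Safe stepS finalS σ0 →
      (∀ r, Terminates stepT finalT τ0 r → Terminates stepS finalS σ0 r) ∧
      (Diverges stepT τ0 → Diverges stepS σ0) ∧
      (GoesWrong stepT finalT τ0 → GoesWrong stepS finalS σ0) := by
  intro hs
  obtain ⟨a1, b1, c1⟩ := h1 hs
  have hm : Safe stepM finalM μ0 := by
    intro m hm
    by_contra hcon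
    obtain ⟨s, hr, hst, hf⟩ := c1
      ⟨m, hm, fun h => hcon (Or.inl h), fun h => hcon (Or.inr h)⟩
    exact (hs s hr).elim hst hf
  obtain ⟨a2, b2, c2⟩ := h2 hm
  exact ⟨fun r h => a1 r (a2 r h), fun h => b1 (b2 h), fun h => c1 (c2 h)⟩
end
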